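/- arXiv:2512.12369 — 2 statements merged into one kernel-verified Lean document; each statement's English description precedes it below -/
import Mathlib

section
/- Every centrally symmetric convex body in the plane is a zonoid: the set of symmetric plane convex bodies equals the closed convex hull (with respect to the Hausdorff distance, using Minkowski combinations) of the set of centrally symmetric segments. -/
open Pointwise

namespace PlaneZonoid

abbrev E2 := EuclideanSpace ℝ (Fin 2)

/-- The linear functional in direction `(cos t, sin t)`. -/
noncomputable def L (t : ℝ) (x : E2) : ℝ := x 0 * Real.cos t + x 1 * Real.sin t

lemma L_pi (t : ℝ) (x : E2) : L (t + Real.pi) x = - L t x := by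
  simp [L]; ring

lemma L_neg (t : ℝ) (x : E2) : L t (-x) = - L t x := by
  simp [L]; ring

lemma L_lip (s t R : ℝ) (x : E2) (h0 : |x 0| ≤ R) (h1 : |x 1| ≤ R) :
    L t x ≤ L s x + 2 * R * |t - s| := by
  have hR : 0 ≤ R := (abs_nonneg _).trans h0
  have a : |Real.cos t - Real.cos s| ≤ |t - s| := Real.abs_cos_sub_cos_le t s
  have b : |Real.sin t - Real.sin s| ≤ |t - s| := Real.abs_sin_sub_sin_le t s
  have a' : x 0 * (Real.cos t - Real.cos s) ≤ R * |t - s| :=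
    (le_abs_self _).trans (by rw [abs_mul]; gcongr)
  have b' : x 1 * (Real.sin t - Real.sin s) ≤ R * |t - s| :=
    (le_abs_self _).trans (by rw [abs_mul]; gcongr)
  unfold L
  linarith

lemma exists_angle (a b : ℝ) (h : a ^ 2 + b ^ 2 = 1) :
    ∃ t : ℝ, a = Real.cos t ∧ b = Real.sin t := by
  have hn : ‖(⟨a, b⟩ : ℂ)‖ = 1 := by
    rw [Complex.norm_eq_sqrt_sq_add_sq]; simp [h]
  have hz : (⟨a, b⟩ : ℂ) ≠ 0 := by
    intro h0; rw [h0] at hn; simp at hn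
  refine ⟨Complex.arg ⟨a, b⟩, ?_, ?_⟩
  · rw [Complex.cos_arg hz, hn]; simp
  · rw [Complex.sin_arg, hn]; simp

lemma near (A B : Set E2) (δ R : ℝ) (hδ : 0 < δ) (hBn : B.Nonempty) (hBc : IsCompact B)
    (hBv : Convex ℝ B)
    (hA : ∀ x ∈ A, |x 0| ≤ R ∧ |x 1| ≤ R) (hB : ∀ x ∈ B, |x 0| ≤ R ∧ |x 1| ≤ R)
    (hAB : ∀ k : ℤ, ∀ x ∈ A, ∃ y ∈ B, L (k * δ) x ≤ L (k * δ) y) :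
    ∀ x ∈ A, ∃ y ∈ B, dist x y ≤ 4 * R * δ := by
  intro x hx
  obtain ⟨p, hp, hpe⟩ := exists_norm_eq_iInf_of_complete_convex hBn hBc.isComplete hBv x
  rw [norm_eq_iInf_iff_real_inner_le_zero hBv hp] at hpe
  refine ⟨p, hp, ?_⟩
  have hR : 0 ≤ R := (abs_nonneg _).trans (hA x hx).1
  rw [dist_eq_norm]
  rcases eq_or_ne (x - p) 0 with h | h
  · rw [h, norm_zero]; positivity
  set r := ‖x - p‖ with hr
  have hr0 : 0 < r := norm_pos_iff.mpr h
  have hr2 : r ^ 2 = (x 0 - p 0) ^ 2 + (x 1 - p 1) ^ 2 := by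
    rw [hr, EuclideanSpace.norm_sq_eq]; simp [Fin.sum_univ_two]
  obtain ⟨t, ht0, ht1⟩ := exists_angle ((x 0 - p 0) / r) ((x 1 - p 1) / r) (by
    field_simp; rw [hr2])
  have e0 : x 0 - p 0 = r * Real.cos t := by rw [← ht0]; field_simp
  have e1 : x 1 - p 1 = r * Real.sin t := by rw [← ht1]; field_simp
  have hmax : ∀ w ∈ B, L t w ≤ L t p := by
    intro w hw
    have := hpe w hw
    simp only [PiLp.inner_apply, Fin.sum_univ_two, PiLp.sub_apply, e0, e1] at this
    simp at this
    have h2 : r * (L t w - L t p) ≤ 0 := by unfold L; linarith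
    have := nonpos_of_mul_nonpos_right h2 hr0
    linarith
  have hrL : r = L t x - L t p := by
    have := Real.sin_sq_add_cos_sq t
    unfold L
    have : r = r * (Real.sin t ^ 2 + Real.cos t ^ 2) := by rw [this, mul_one]
    linear_combination this - e0 * Real.cos t - e1 * Real.sin t
  set k : ℤ := ⌊t / δ⌋
  have hk1 : (k : ℝ) * δ ≤ t := by
    have := Int.floor_le (t / δ); rwa [le_div_iff₀ hδ] at this
  have hk2 : t < (k + 1 : ℝ) * δ := by
    have := Int.lt_floor_add_one (t / δ); rwa [div_lt_iff₀ hδ] at this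
  have hd : |t - k * δ| ≤ δ := by rw [abs_le]; constructor <;> linarith
  have hd' : |k * δ - t| ≤ δ := by rw [abs_sub_comm]; exact hd
  obtain ⟨y, hy, hxy⟩ := hAB k x hx
  have i1 := L_lip (k * δ) t R x (hA x hx).1 (hA x hx).2
  have i2 := L_lip t (k * δ) R y (hB y hy).1 (hB y hy).2
  have i3 := hmax y hy
  have j1 : 2 * R * |t - k * δ| ≤ 2 * R * δ := by gcongr
  have j2 : 2 * R * |k * δ - t| ≤ 2 * R * δ := by gcongr
  linarith

lemma sum_compact {n : ℕ} (v : Fin n → E2) :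
    IsCompact (∑ i : Fin n, segment ℝ (-(v i)) (v i)) := by
  classical
  refine Finset.sum_induction _ IsCompact (fun a b ha hb => ha.add hb) isCompact_singleton ?_
  intro i _
  rw [segment_eq_image_lineMap]
  exact isCompact_Icc.image (AffineMap.lineMap_continuous)

lemma sum_convex {n : ℕ} (v : Fin n → E2) :
    Convex ℝ (∑ i : Fin n, segment ℝ (-(v i)) (v i)) := by
  refine Finset.sum_induction _ (Convex ℝ) (fun a b ha hb => ha.add hb) (convex_singleton 0) ?_
  intro i _
  exact convex_segment _ _

lemma neg_segment (a : E2) : -(segment ℝ (-a) a) = segment ℝ (-a) a := by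
  have h : ∀ x ∈ segment ℝ (-a) a, -x ∈ segment ℝ (-a) a := by
    rintro x ⟨p, q, hp, hq, hpq, rfl⟩
    exact ⟨q, p, hq, hp, by linarith, by simp⟩
  ext x
  rw [Set.mem_neg]
  exact ⟨fun hx => by simpa using h _ hx, h x⟩

lemma sum_neg {n : ℕ} (v : Fin n → E2) :
    -(∑ i : Fin n, segment ℝ (-(v i)) (v i)) = ∑ i : Fin n, segment ℝ (-(v i)) (v i) := by
  refine Finset.sum_induction _ (fun s : Set E2 => -s = s) (fun a b ha hb => ?_) (by simp) ?_
  · rw [neg_add, ha, hb]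
  intro i _
  exact neg_segment _

lemma sum_nonempty {n : ℕ} (v : Fin n → E2) :
    (∑ i : Fin n, segment ℝ (-(v i)) (v i)).Nonempty := by
  refine Finset.sum_induction _ Set.Nonempty (fun a b ha hb => ha.add hb) ⟨0, rfl⟩ ?_
  intro i _
  exact ⟨_, left_mem_segment _ _ _⟩

lemma L_sum {n : ℕ} (t : ℝ) (g : Fin n → E2) : L t (∑ i, g i) = ∑ i, L t (g i) := by
  simp [L, Finset.sum_add_distrib, Finset.sum_mul]

lemma L_le {n : ℕ} (v : Fin n → E2) (t : ℝ) (x : E2)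
    (hx : x ∈ ∑ i : Fin n, segment ℝ (-(v i)) (v i)) : L t x ≤ ∑ i, |L t (v i)| := by
  rw [Set.mem_finsetSum] at hx
  obtain ⟨g, hg, rfl⟩ := hx
  rw [L_sum]
  refine Finset.sum_le_sum fun i _ => ?_
  obtain ⟨p, q, hp, hq, hpq, he⟩ := hg (Finset.mem_univ i)
  rw [← he]
  have : L t (p • -v i + q • v i) = p * (- L t (v i)) + q * L t (v i) := by simp [L]; ring
  rw [this]
  have h1 := mul_le_mul_of_nonneg_left (neg_le_abs (L t (v i))) hp
  have h2 := mul_le_mul_of_nonneg_left (le_abs_self (L t (v i))) hq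
  calc _ ≤ p * |L t (v i)| + q * |L t (v i)| := add_le_add h1 h2
    _ = _ := by rw [← add_mul, hpq, one_mul]

lemma L_attain {n : ℕ} (v : Fin n → E2) (t : ℝ) :
    ∃ x ∈ ∑ i : Fin n, segment ℝ (-(v i)) (v i), L t x = ∑ i, |L t (v i)| := by
  refine ⟨∑ i, if 0 ≤ L t (v i) then v i else -(v i), ?_, ?_⟩
  · rw [Set.mem_finsetSum]
    refine ⟨_, ?_, rfl⟩
    intro i _
    split_ifs
    · exact right_mem_segment _ _ _
    · exact left_mem_segment _ _ _
  · rw [L_sum]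
    refine Finset.sum_congr rfl fun i _ => ?_
    split_ifs with h
    · rw [abs_of_nonneg h]
    · rw [L_neg, abs_of_neg (not_le.mp h)]

/-- The sine recurrence forces a `π`-periodic solution to vanish. -/
lemma recur (Φ : ℝ → ℝ) (N : ℕ) (hN : 2 ≤ N) (δ : ℝ) (hδ : N * δ = Real.pi)
    (hper : ∀ t, Φ (t + Real.pi) = Φ t)
    (hrec : ∀ k : ℕ, k < N → Φ (k * δ + δ) + Φ (k * δ - δ) = 2 * Real.cos δ * Φ (k * δ)) :
    ∀ k : ℤ, Φ (k * δ) = 0 := by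
  have hN' : (2 : ℝ) ≤ N := by exact_mod_cast hN
  have hδ0 : 0 < δ := by
    have := Real.pi_pos
    by_contra! h
    nlinarith
  have hδπ : δ < Real.pi := by nlinarith
  have hs : 0 < Real.sin δ := Real.sin_pos_of_pos_of_lt_pi hδ0 hδπ
  have key : ∀ k : ℕ, k < N →
      Real.sin δ * Φ (k * δ) = Real.sin (k * δ) * Φ δ - Real.sin (k * δ - δ) * Φ 0 ∧
      Real.sin δ * Φ (k * δ + δ) = Real.sin (k * δ + δ) * Φ δ - Real.sin (k * δ) * Φ 0 := by
    intro k
    induction k with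
    | zero => intro _; simp
    | succ k ih =>
      intro hk
      obtain ⟨h1, h2⟩ := ih (by omega)
      have hr := hrec (k + 1) hk
      have e1 : ((k + 1 : ℕ) : ℝ) * δ = k * δ + δ := by push_cast; ring
      rw [e1] at hr ⊢
      have e2 : (k : ℝ) * δ + δ - δ = k * δ := by ring
      rw [e2] at hr ⊢
      refine ⟨h2, ?_⟩
      have t1 : Real.sin (k * δ + δ + δ) =
          2 * Real.cos δ * Real.sin (k * δ + δ) - Real.sin (k * δ) := by
        have : Real.sin (k * δ) = Real.sin (k * δ + δ - δ) := by rw [e2]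
        rw [this, Real.sin_sub, Real.sin_add (k * δ + δ)]; ring
      have t2 : Real.sin (k * δ + δ) =
          2 * Real.cos δ * Real.sin (k * δ) - Real.sin (k * δ - δ) := by
        rw [Real.sin_sub, Real.sin_add]; ring
      linear_combination Real.sin δ * hr + 2 * Real.cos δ * h2 - h1 - Φ δ * t1 + Φ 0 * t2
  obtain ⟨k1, k2⟩ := key (N - 1) (by omega)
  have eN : ((N - 1 : ℕ) : ℝ) * δ = Real.pi - δ := by
    rw [Nat.cast_sub (by omega)]; push_cast; linarith
  rw [eN] at k1 k2
  have e3 : Φ Real.pi = Φ 0 := by simpa using hper 0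
  have e4 : Φ (Real.pi - δ) = Φ (-δ) := by rw [← hper (-δ)]; congr 1; ring
  simp only [sub_add_cancel, Real.sin_pi, Real.sin_pi_sub, e3] at k2
  have z0 : Φ 0 = 0 := by
    have : Real.sin δ * Φ 0 = 0 := by linarith
    exact (mul_eq_zero.mp this).resolve_left hs.ne'
  rw [e4, z0, Real.sin_pi_sub] at k1
  have hr0 := hrec 0 (by omega)
  simp only [Nat.cast_zero, zero_mul, zero_add, zero_sub, z0, mul_zero] at hr0
  have z1 : Φ δ = 0 := by
    have : Φ (-δ) = Φ δ := mul_left_cancel₀ hs.ne' (by linarith)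
    linarith
  have nat0 : ∀ k : ℕ, k < N → Φ (k * δ) = 0 := by
    intro k hk
    have := (key k hk).1
    rw [z0, z1] at this
    have : Real.sin δ * Φ (k * δ) = 0 := by linarith
    exact (mul_eq_zero.mp this).resolve_left hs.ne'
  intro k
  have hNz : (0 : ℤ) < N := by omega
  have hdm := Int.emod_add_mul_ediv k N
  have h0 := Int.emod_nonneg k hNz.ne'
  have h1 := Int.emod_lt_of_pos k hNz
  obtain ⟨m, hm⟩ := Int.eq_ofNat_of_zero_le h0
  have hP : Function.Periodic Φ Real.pi := hper
  have e : (k : ℝ) * δ = m * δ + ((k / N : ℤ) : ℝ) * Real.pi := by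
    have : (k : ℝ) = m + N * ((k / N : ℤ) : ℝ) := by
      rw [hm] at hdm
      exact_mod_cast hdm.symm
    rw [← hδ]
    linear_combination δ * this
  rw [e, hP.int_mul (k / N) (m * δ)]
  exact nat0 m (by omega)

lemma sin_rec (N : ℕ) (hN : 2 ≤ N) (δ : ℝ) (hδ : N * δ = Real.pi) (j k : ℕ) (hj : j < N)
    (hk : k < N) :
    |Real.sin (k * δ + δ - j * δ)| + |Real.sin (k * δ - δ - j * δ)| =
      2 * Real.cos δ * |Real.sin (k * δ - j * δ)| + if j = k then 2 * Real.sin δ else 0 := by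
  have hN' : (2 : ℝ) ≤ N := by exact_mod_cast hN
  have hδ0 : 0 < δ := by
    have := Real.pi_pos
    by_contra! h
    nlinarith
  have hδπ : δ < Real.pi := by nlinarith
  have hs : 0 < Real.sin δ := Real.sin_pos_of_pos_of_lt_pi hδ0 hδπ
  have base : Real.sin (k * δ + δ - j * δ) + Real.sin (k * δ - δ - j * δ) =
      2 * Real.cos δ * Real.sin (k * δ - j * δ) := by
    have a : (k * δ + δ - j * δ : ℝ) = (k * δ - j * δ) + δ := by ring
    have b : (k * δ - δ - j * δ : ℝ) = (k * δ - j * δ) - δ := by ring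
    rw [a, b, Real.sin_add (k * δ - j * δ), Real.sin_sub (k * δ - j * δ)]; ring
  rcases lt_trichotomy j k with h | h | h
  · have h1 : (j : ℝ) + 1 ≤ k := by exact_mod_cast h
    have h2 : (k : ℝ) + 1 ≤ N := by exact_mod_cast hk
    have h3 : (0 : ℝ) ≤ j := by positivity
    have m1 := mul_le_mul_of_nonneg_right h1 hδ0.le
    have m2 := mul_le_mul_of_nonneg_right h2 hδ0.le
    have m3 := mul_nonneg h3 hδ0.le
    rw [if_neg h.ne, abs_of_nonneg, abs_of_nonneg, abs_of_nonneg, base, add_zero]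
    all_goals apply Real.sin_nonneg_of_nonneg_of_le_pi <;> linarith
  · subst h
    have a : (j * δ + δ - j * δ : ℝ) = δ := by ring
    have b : (j * δ - δ - j * δ : ℝ) = -δ := by ring
    rw [a, b]
    simp [abs_of_pos hs]; ring
  · have h1 : (k : ℝ) + 1 ≤ j := by exact_mod_cast h
    have h2 : (j : ℝ) + 1 ≤ N := by exact_mod_cast hj
    have h3 : (0 : ℝ) ≤ k := by positivity
    have m1 := mul_le_mul_of_nonneg_right h1 hδ0.le
    have m2 := mul_le_mul_of_nonneg_right h2 hδ0.le
    have m3 := mul_nonneg h3 hδ0.le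
    rw [if_neg h.ne', abs_of_nonpos, abs_of_nonpos, abs_of_nonpos, add_zero]
    · linarith
    all_goals apply Real.sin_nonpos_of_nonpos_of_neg_pi_le <;> linarith

lemma part1 (K : Set E2) (hKn : K.Nonempty) (hKc : IsCompact K) (hKv : Convex ℝ K)
    (hKs : -K = K) (ε : ℝ) (hε : 0 < ε) : ∃ (n : ℕ) (v : Fin n → E2),
        Metric.hausdorffDist K (∑ i : Fin n, segment ℝ (-(v i)) (v i)) < ε := by
  have hneg : ∀ x ∈ K, -x ∈ K := fun x hx => by rw [← hKs]; simpa using hx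
  obtain ⟨R, hRb⟩ := hKc.isBounded.exists_norm_le
  have hbd : ∀ x ∈ K, |x 0| ≤ R ∧ |x 1| ≤ R := fun x hx =>
    ⟨(PiLp.norm_apply_le x 0).trans (hRb x hx), (PiLp.norm_apply_le x 1).trans (hRb x hx)⟩
  have hR : 0 ≤ R := by
    obtain ⟨x, hx⟩ := hKn
    exact (norm_nonneg x).trans (hRb x hx)
  have hX : ∀ t, ∃ x ∈ K, ∀ y ∈ K, L t y ≤ L t x := by
    intro t
    have hc : Continuous (L t) := by unfold L; fun_prop
    obtain ⟨x, hx, hm⟩ := hKc.exists_isMaxOn hKn hc.continuousOn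
    exact ⟨x, hx, fun y hy => hm hy⟩
  choose X hXK hXm using hX
  set h : ℝ → ℝ := fun t => L t (X t) with hh
  have hper : ∀ t, h (t + Real.pi) = h t := by
    intro t
    apply le_antisymm
    · simp only [hh]
      rw [L_pi, ← L_neg]
      exact hXm t _ (hneg _ (hXK _))
    · simp only [hh]
      have := hXm (t + Real.pi) _ (hneg _ (hXK t))
      rw [L_pi, L_neg, neg_neg] at this
      exact this
  obtain ⟨M, hM⟩ := exists_nat_gt (4 * R * Real.pi / ε)
  set m : ℕ := M + 1 with hm
  set N : ℕ := 2 * m with hNdef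
  set δ : ℝ := Real.pi / N with hδdef
  have hN2 : 2 ≤ N := by omega
  have hNpos : (0 : ℝ) < N := by positivity
  have hNδ : N * δ = Real.pi := by rw [hδdef]; field_simp
  have hδ0 : 0 < δ := by have := Real.pi_pos; positivity
  have hN' : (2 : ℝ) ≤ N := by exact_mod_cast hN2
  have hs : 0 < Real.sin δ := Real.sin_pos_of_pos_of_lt_pi hδ0 (by nlinarith)
  have hsmall : 4 * R * δ < ε := by
    have hMN : (M : ℝ) < N := by exact_mod_cast (by omega : M < N)
    have := hM.trans hMN
    rw [div_lt_iff₀ hε] at this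
    rw [hδdef, ← mul_div_assoc, div_lt_iff₀ hNpos]
    linarith
  set c : ℕ → ℝ := fun k =>
    (h (k * δ + δ) + h (k * δ - δ) - 2 * Real.cos δ * h (k * δ)) / (2 * Real.sin δ) with hc
  have hc0 : ∀ k, 0 ≤ c k := by
    intro k
    simp only [hc]
    apply div_nonneg _ (by positivity)
    have h1 := hXm (k * δ + δ) _ (hXK (k * δ))
    have h2 := hXm (k * δ - δ) _ (hXK (k * δ))
    have h3 : L (k * δ + δ) (X (k * δ)) + L (k * δ - δ) (X (k * δ)) =
        2 * Real.cos δ * L (k * δ) (X (k * δ)) := by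
      simp only [L, Real.cos_add, Real.cos_sub, Real.sin_add, Real.sin_sub]; ring
    simp only [hh]
    linarith
  let v : Fin N → E2 := fun j => c j • !₂[-Real.sin (j * δ), Real.cos (j * δ)]
  have hLv : ∀ t j, |L t (v j)| = c j * |Real.sin (t - j * δ)| := by
    intro t j
    have : L t (v j) = c j * Real.sin (t - j * δ) := by
      simp [L, v, Real.sin_sub]; ring
    rw [this, abs_mul, abs_of_nonneg (hc0 _)]
  set H : ℝ → ℝ := fun t => ∑ j, |L t (v j)| with hH
  have hzero := recur (fun t => H t - h t) N hN2 δ hNδ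
    (by
      intro t
      simp only [hper, hH, L_pi, abs_neg])
    (by
      intro k hk
      have e1 : H (k * δ + δ) + H (k * δ - δ) =
          2 * Real.cos δ * H (k * δ) + c k * (2 * Real.sin δ) := by
        simp only [hH, hLv]
        rw [← Finset.sum_add_distrib, Finset.mul_sum]
        have : ∀ j : Fin N, c j * |Real.sin (k * δ + δ - j * δ)| +
            c j * |Real.sin (k * δ - δ - j * δ)| =
            2 * Real.cos δ * (c j * |Real.sin (k * δ - j * δ)|) +
            if j = ⟨k, hk⟩ then c j * (2 * Real.sin δ) else 0 := by
          intro j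
          rw [← mul_add, sin_rec N hN2 δ hNδ j k j.2 hk]
          by_cases hjk : j = ⟨k, hk⟩
          · subst hjk; simp
          · have : (j : ℕ) ≠ k := fun e => hjk (Fin.ext e)
            rw [if_neg hjk, if_neg this]; ring
        rw [Finset.sum_congr rfl fun j _ => this j, Finset.sum_add_distrib]
        simp
      have e2 : c k * (2 * Real.sin δ) =
          h (k * δ + δ) + h (k * δ - δ) - 2 * Real.cos δ * h (k * δ) := by
        simp only [hc]; field_simp
      linear_combination e1 + e2)
  have hHh : ∀ k : ℤ, H (k * δ) = h (k * δ) := fun k => sub_eq_zero.mp (hzero k)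
  set Z := ∑ i : Fin N, segment ℝ (-(v i)) (v i) with hZ
  have hZle : ∀ k : ℤ, ∀ x ∈ Z, L (k * δ) x ≤ L (k * δ) (X (k * δ)) := fun k x hx =>
    (L_le v _ x hx).trans (hHh k).le
  have hZneg : ∀ x ∈ Z, -x ∈ Z := fun x hx => by
    rw [hZ, ← sum_neg]; simpa using hx
  have hZbd : ∀ x ∈ Z, |x 0| ≤ R ∧ |x 1| ≤ R := by
    have hm2 : ((m : ℤ) : ℝ) * δ = Real.pi / 2 := by
      have : (N : ℝ) = 2 * m := by rw [hNdef]; push_cast; ring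
      rw [this] at hNδ
      push_cast
      linarith
    have l0 : ∀ x ∈ Z, x 0 ≤ R := by
      intro x hx
      have := hZle 0 x hx
      simp [L] at this
      exact this.trans ((le_abs_self _).trans (hbd _ (hXK _)).1)
    have l1 : ∀ x ∈ Z, x 1 ≤ R := by
      intro x hx
      have := hZle m x hx
      rw [hm2] at this
      simp [L] at this
      exact this.trans ((le_abs_self _).trans (hbd _ (hXK _)).2)
    intro x hx
    have n0 := l0 _ (hZneg x hx)
    have n1 := l1 _ (hZneg x hx)
    simp only [PiLp.neg_apply] at n0 n1
    exact ⟨abs_le.mpr ⟨by linarith, l0 x hx⟩, abs_le.mpr ⟨by linarith, l1 x hx⟩⟩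
  refine ⟨N, v, lt_of_le_of_lt ?_ hsmall⟩
  refine Metric.hausdorffDist_le_of_mem_dist (by positivity) ?_ ?_
  · refine near K Z δ R hδ0 (sum_nonempty v) (sum_compact v) (sum_convex v) hbd hZbd ?_
    intro k x hx
    obtain ⟨y, hy, he⟩ := L_attain v (k * δ)
    refine ⟨y, hy, ?_⟩
    rw [he]
    exact (hXm _ x hx).trans (hHh k).ge
  · refine near Z K δ R hδ0 hKn hKc hKv hZbd hbd ?_
    intro k x hx
    exact ⟨_, hXK _, hZle k x hx⟩

lemma part2 (K : Set E2) (hKn : K.Nonempty) (hKc : IsCompact K)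
    (hK : ∀ ε > (0:ℝ), ∃ (n : ℕ) (v : Fin n → E2),
        Metric.hausdorffDist K (∑ i : Fin n, segment ℝ (-(v i)) (v i)) < ε) :
    Convex ℝ K ∧ -K = K := by
  have happ : ∀ ε > (0:ℝ), ∃ Z : Set E2, Convex ℝ Z ∧ -Z = Z ∧
      (∀ x ∈ K, ∃ z ∈ Z, dist x z < ε) ∧ (∀ z ∈ Z, ∃ x ∈ K, dist x z < ε) := by
    intro ε hε
    obtain ⟨n, v, hv⟩ := hK ε hε
    have fin := Metric.hausdorffEDist_ne_top_of_nonempty_of_bounded hKn (sum_nonempty v)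
      hKc.isBounded (sum_compact v).isBounded
    refine ⟨_, sum_convex v, sum_neg v, ?_, ?_⟩
    · intro x hx
      exact Metric.exists_dist_lt_of_hausdorffDist_lt hx hv fin
    · intro z hz
      exact Metric.exists_dist_lt_of_hausdorffDist_lt' hz hv fin
  have hcl : ∀ y : E2, (∀ ε > (0:ℝ), ∃ x ∈ K, dist y x < ε) → y ∈ K := by
    intro y hy
    rw [← hKc.isClosed.closure_eq]
    exact Metric.mem_closure_iff.mpr hy
  have hneg : ∀ x ∈ K, -x ∈ K := by
    intro x hx
    apply hcl
    intro ε hε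
    obtain ⟨Z, -, hs, h1, h2⟩ := happ (ε / 2) (by positivity)
    obtain ⟨z, hz, hxz⟩ := h1 x hx
    obtain ⟨y, hy, hyz⟩ := h2 (-z) (by rw [← hs]; simpa using hz)
    refine ⟨y, hy, ?_⟩
    have t := dist_triangle_right (-x) y (-z)
    rw [dist_neg_neg] at t
    linarith
  refine ⟨?_, ?_⟩
  · intro x hx y hy a b ha hb hab
    apply hcl
    intro ε hε
    obtain ⟨Z, hc, -, h1, h2⟩ := happ (ε / 2) (by positivity)
    obtain ⟨x', hx', hxx⟩ := h1 x hx
    obtain ⟨y', hy', hyy⟩ := h1 y hy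
    obtain ⟨w, hw, hwz⟩ := h2 _ (hc hx' hy' ha hb hab)
    refine ⟨w, hw, ?_⟩
    have t := dist_triangle_right (a • x + b • y) w (a • x' + b • y')
    have t2 := dist_add_add_le (a • x) (b • y) (a • x') (b • y')
    rw [dist_smul₀, dist_smul₀, Real.norm_of_nonneg ha, Real.norm_of_nonneg hb] at t2
    have : a * dist x x' + b * dist y y' ≤ a * (ε / 2) + b * (ε / 2) := by gcongr
    rw [← add_mul, hab, one_mul] at this
    linarith
  · ext x
    rw [Set.mem_neg]
    exact ⟨fun hx => by simpa using hneg _ hx, hneg x⟩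

end PlaneZonoid

/-- Every centrally symmetric plane convex body is a zonoid: it is, in the Hausdorff
distance, a limit of finite Minkowski sums of centrally symmetric segments; conversely any
such Hausdorff limit which is a nonempty compact set is a symmetric convex body. -/
theorem symmetric_plane_convex_bodies_are_zonoids :
    (∀ K : Set (EuclideanSpace ℝ (Fin 2)), K.Nonempty → IsCompact K → Convex ℝ K →
      -K = K → ∀ ε > (0:ℝ), ∃ (n : ℕ) (v : Fin n → EuclideanSpace ℝ (Fin 2)),
        Metric.hausdorffDist K (∑ i : Fin n, segment ℝ (-(v i)) (v i)) < ε) ∧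
    (∀ K : Set (EuclideanSpace ℝ (Fin 2)), K.Nonempty → IsCompact K →
      (∀ ε > (0:ℝ), ∃ (n : ℕ) (v : Fin n → EuclideanSpace ℝ (Fin 2)),
        Metric.hausdorffDist K (∑ i : Fin n, segment ℝ (-(v i)) (v i)) < ε) →
      Convex ℝ K ∧ -K = K) := by
  exact ⟨PlaneZonoid.part1, PlaneZonoid.part2⟩
end

section
/- Let E₁, ..., Eₙ (n ≥ 2) be pairwise non-homothetic origin-symmetric ellipses in ℝ² and c₁, ..., cₙ > 0. Then the Minkowski sum c₁E₁ + ... + cₙEₙ is not an ellipse. -/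
open Pointwise

/-- An origin-symmetric ellipse (possibly a disc) in the plane: the image of the closed
unit disc under an invertible linear map. -/
def IsSymmEllipse (E : Set (EuclideanSpace ℝ (Fin 2))) : Prop :=
  ∃ A : EuclideanSpace ℝ (Fin 2) ≃ₗ[ℝ] EuclideanSpace ℝ (Fin 2),
    E = A '' Metric.closedBall 0 1

/-- The slit-plane condition for `(z-x)^2+y^2`. -/
lemma ell_slit (x y : ℝ) (hy : 0 < y) (z : ℂ) (h0 : 0 ≤ z.im) (h1 : z.im ≤ y)
    (h : z.im < y ∨ z.re ≠ x) : (z - x) ^ 2 + (y : ℂ) ^ 2 ∈ Complex.slitPlane := by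
  rw [Complex.mem_slitPlane_iff]
  have hre : ((z - x) ^ 2 + (y : ℂ) ^ 2).re = (z.re - x) ^ 2 - z.im ^ 2 + y ^ 2 := by
    simp [pow_two]
  have him : ((z - x) ^ 2 + (y : ℂ) ^ 2).im = 2 * (z.re - x) * z.im := by
    simp [pow_two]; ring
  rw [hre, him]
  by_cases hx : z.re = x
  · left
    have : z.im < y := by tauto
    rw [hx]; nlinarith
  · by_cases hz : z.im = 0
    · left; rw [hz]; nlinarith [sq_nonneg (z.re - x), pow_pos hy 2]
    · right
      exact mul_ne_zero (mul_ne_zero two_ne_zero (sub_ne_zero.2 hx)) hz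

lemma ell_slit_strip (x y : ℝ) (hy : 0 < y) (z : ℂ) (h : |z.im| < y) :
    (z - x) ^ 2 + (y : ℂ) ^ 2 ∈ Complex.slitPlane := by
  obtain ⟨h1, h2⟩ := abs_lt.1 h
  rw [Complex.mem_slitPlane_iff]
  have hre : ((z - x) ^ 2 + (y : ℂ) ^ 2).re = (z.re - x) ^ 2 - z.im ^ 2 + y ^ 2 := by
    simp [pow_two]
  have him : ((z - x) ^ 2 + (y : ℂ) ^ 2).im = 2 * (z.re - x) * z.im := by
    simp [pow_two]; ring
  rw [hre, him]
  by_cases hx : z.re = x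
  · left
    rw [hx]; nlinarith
  · by_cases hz : z.im = 0
    · left; rw [hz]; nlinarith [sq_nonneg (z.re - x), pow_pos hy 2]
    · right
      exact mul_ne_zero (mul_ne_zero two_ne_zero (sub_ne_zero.2 hx)) hz

/-- The principal branch of the square root of `(z-x)^2+y^2`. -/
noncomputable def ellRoot (x y : ℝ) (z : ℂ) : ℂ := ((z - x) ^ 2 + (y : ℂ) ^ 2) ^ ((2 : ℂ)⁻¹)

lemma ellRoot_analyticAt (x y : ℝ) (z : ℂ) (h : (z - x) ^ 2 + (y : ℂ) ^ 2 ∈ Complex.slitPlane) :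
    AnalyticAt ℂ (ellRoot x y) z := by
  unfold ellRoot
  exact AnalyticAt.cpow (by fun_prop) (by fun_prop) h

lemma ellRoot_sq (x y : ℝ) (z : ℂ) : ellRoot x y z ^ 2 = (z - x) ^ 2 + (y : ℂ) ^ 2 :=
  Complex.cpow_ofNat_inv_pow _ 2

lemma ellRoot_ofReal (x y t : ℝ) :
    ellRoot x y t = ((Real.sqrt ((t - x) ^ 2 + y ^ 2) : ℝ) : ℂ) := by
  unfold ellRoot
  rw [Real.sqrt_eq_rpow, Complex.ofReal_cpow (by positivity)]
  push_cast
  norm_num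

lemma ell_indep {ι : Type*} [Fintype ι] (x y a : ι → ℝ) (hy : ∀ i, 0 < y i)
    (hinj : ∀ i j, x i = x j → y i = y j → i = j)
    (h : ∀ t : ℝ, ∑ i, a i * Real.sqrt ((t - x i) ^ 2 + y i ^ 2) = 0) : ∀ i, a i = 0 := by
  classical
  by_contra hne
  push Not at hne
  set S : Finset ι := Finset.univ.filter (fun i => a i ≠ 0) with hS
  have hSne : S.Nonempty := by
    obtain ⟨i, hi⟩ := hne
    exact ⟨i, by simp [hS, hi]⟩
  obtain ⟨k, hkS, hk⟩ := S.exists_min_image y hSne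
  have hak : a k ≠ 0 := by simpa [hS] using hkS
  have hsum : ∀ f : ι → ℂ, ∑ i ∈ S, (a i : ℂ) * f i = ∑ i, (a i : ℂ) * f i := by
    intro f
    rw [hS, Finset.sum_filter]
    refine Finset.sum_congr rfl fun i _ => ?_
    by_cases hi : a i = 0 <;> simp [hi]
  -- the strip
  let U : Set ℂ := {z | |z.im| < y k}
  have hUeq : U = Complex.im ⁻¹' Set.Ioo (-(y k)) (y k) := by
    ext z; simp [U, abs_lt]
  have hUconv : Convex ℝ U := by
    rw [hUeq]
    exact (convex_Ioo _ _).linear_preimage Complex.imLm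
  let F : ℂ → ℂ := fun z => ∑ i ∈ S, (a i : ℂ) * ellRoot (x i) (y i) z
  have hF : AnalyticOnNhd ℂ F U := by
    intro z hz
    refine Finset.analyticAt_fun_sum _ fun i hi => ?_
    exact analyticAt_const.mul (ellRoot_analyticAt _ _ _
      (ell_slit_strip _ _ (hy i) _ (lt_of_lt_of_le hz (hk i hi))))
  have hreal : ∀ t : ℝ, F t = 0 := by
    intro t
    simp only [F]
    rw [hsum]
    simp only [ellRoot_ofReal]
    exact_mod_cast h t
  have hfreq : ∃ᶠ z in nhdsWithin (0 : ℂ) {0}ᶜ, F z = 0 := by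
    have ht : Filter.Tendsto (fun t : ℝ => (t : ℂ)) (nhdsWithin 0 {0}ᶜ)
        (nhdsWithin (0 : ℂ) {0}ᶜ) := by
      apply tendsto_nhdsWithin_of_tendsto_nhds_of_eventually_within
      · exact (Complex.continuous_ofReal.tendsto' 0 0 (by simp)).mono_left nhdsWithin_le_nhds
      · filter_upwards [self_mem_nhdsWithin] with t ht
        simpa using ht
    exact ht.frequently (Filter.Eventually.frequently (Filter.Eventually.of_forall hreal))
  have hzero : Set.EqOn F 0 U :=
    hF.eqOn_zero_of_preconnected_of_frequently_eq_zero hUconv.isPreconnected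
      (show (0 : ℂ) ∈ U by simp [U, hy k]) hfreq
  -- the branch point
  let w : ℂ := ⟨x k, y k⟩
  let G : ℂ → ℂ := fun z => ∑ i ∈ S.erase k, (a i : ℂ) * ellRoot (x i) (y i) z
  have hG : AnalyticAt ℂ G w := by
    refine Finset.analyticAt_fun_sum _ fun i hi => ?_
    rw [Finset.mem_erase] at hi
    refine analyticAt_const.mul (ellRoot_analyticAt _ _ _
      (ell_slit _ _ (hy i) _ (hy k).le (hk i hi.2) ?_))
    by_contra hcon
    push Not at hcon
    exact hi.1 (hinj i k hcon.2.symm (le_antisymm hcon.1 (hk i hi.2)))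
  let P : ℂ → ℂ := fun z => (a k : ℂ) ^ 2 * ((z - x k) ^ 2 + (y k : ℂ) ^ 2)
  have hP : AnalyticAt ℂ P w := by fun_prop
  have hFG : ∀ z ∈ U, G z ^ 2 = P z := by
    intro z hz
    have h1 : (a k : ℂ) * ellRoot (x k) (y k) z + G z = 0 := by
      have := hzero hz
      simp only [F, Pi.zero_apply] at this
      rw [← Finset.add_sum_erase S _ hkS] at this
      exact this
    have h2 : G z = -((a k : ℂ) * ellRoot (x k) (y k) z) := by linear_combination h1
    rw [h2]
    simp only [P]
    rw [← ellRoot_sq]; ring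
  have hfreq2 : ∃ᶠ z in nhdsWithin w {w}ᶜ, G z ^ 2 = P z := by
    have ht : Filter.Tendsto (fun t : ℝ => w - t * Complex.I) (nhdsWithin 0 (Set.Ioi 0))
        (nhdsWithin w {w}ᶜ) := by
      apply tendsto_nhdsWithin_of_tendsto_nhds_of_eventually_within
      · have : Continuous (fun t : ℝ => w - t * Complex.I) := by fun_prop
        exact (this.tendsto' 0 w (by simp)).mono_left nhdsWithin_le_nhds
      · filter_upwards [self_mem_nhdsWithin] with t ht
        have : t ≠ 0 := ne_of_gt ht
        simp [this]
    apply ht.frequently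
    apply Filter.Eventually.frequently
    filter_upwards [Ioo_mem_nhdsGT (hy k)] with t ht
    apply hFG
    have := ht.1
    have := ht.2
    simp only [U, w, Set.mem_ofPred_eq]
    rw [abs_lt]
    constructor <;> simp <;> linarith
  have hev : (fun z => G z ^ 2) =ᶠ[nhds w] P :=
    (AnalyticAt.frequently_eq_iff_eventually_eq (hG.pow 2) hP).1 hfreq2
  have hwx : w - x k = y k * Complex.I := by
    apply Complex.ext <;> simp [w]
  have hPw : P w = 0 := by
    simp only [P]
    rw [hwx, mul_pow, Complex.I_sq]; ring
  have hGw : G w = 0 := by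
    have := hev.eq_of_nhds
    rw [hPw] at this
    exact pow_eq_zero_iff two_ne_zero |>.1 this
  have hd1 : HasDerivAt (fun z => G z ^ 2) 0 w := by
    have := hG.differentiableAt.hasDerivAt.pow 2
    have h3 : HasDerivAt (fun z => G z ^ 2) _ w := this
    convert h3 using 1
    simp [hGw]
  have hd2 : HasDerivAt P ((a k : ℂ) ^ 2 * (2 * (w - x k))) w := by
    have := ((((hasDerivAt_id w).sub_const (x k : ℂ)).pow 2).add_const
      ((y k : ℂ) ^ 2)).const_mul ((a k : ℂ) ^ 2)
    simpa using this
  have := hd1.unique (hd2.congr_of_eventuallyEq hev)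
  rw [hwx] at this
  have h1 : (a k : ℂ) ≠ 0 := by exact_mod_cast hak
  have h2 : (y k : ℂ) ≠ 0 := by exact_mod_cast (hy k).ne'
  exact (mul_ne_zero (pow_ne_zero 2 h1)
    (mul_ne_zero two_ne_zero (mul_ne_zero h2 Complex.I_ne_zero))) this.symm

lemma ell_param {E : Set (EuclideanSpace ℝ (Fin 2))} (hE : IsSymmEllipse E) :
    ∃ a x y : ℝ, 0 < a ∧ 0 < y ∧
      (∀ v, v ∈ E ↔ ∀ w : EuclideanSpace ℝ (Fin 2),
        inner ℝ v w ≤ a * Real.sqrt ((w 0 - x * w 1) ^ 2 + (y * w 1) ^ 2)) ∧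
      (∀ w : EuclideanSpace ℝ (Fin 2), ∃ v ∈ E,
        inner ℝ v w = a * Real.sqrt ((w 0 - x * w 1) ^ 2 + (y * w 1) ^ 2)) := by
  obtain ⟨A, rfl⟩ := hE
  let B := LinearMap.adjoint (A : EuclideanSpace ℝ (Fin 2) →ₗ[ℝ] EuclideanSpace ℝ (Fin 2))
  have hB : ∀ v w, inner ℝ (A v) w = inner ℝ v (B w) := fun v w =>
    (LinearMap.adjoint_inner_right (A : EuclideanSpace ℝ (Fin 2) →ₗ[ℝ] _) v w).symm
  have hBinj : ∀ w, B w = 0 → w = 0 := by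
    intro w hw
    have := hB (A.symm w) w
    rw [hw] at this
    simpa using this
  have hBsurj : Function.Surjective B := by
    apply LinearMap.surjective_of_injective
    exact (injective_iff_map_eq_zero B).2 hBinj
  let e0 : EuclideanSpace ℝ (Fin 2) := !₂[1, 0]
  let e1 : EuclideanSpace ℝ (Fin 2) := !₂[0, 1]
  have hdec : ∀ w : EuclideanSpace ℝ (Fin 2), w = w 0 • e0 + w 1 • e1 := by
    intro w
    ext i; fin_cases i <;> simp [e0, e1]
  have hu : B e0 ≠ 0 := by
    intro h0
    have := congrArg (fun z : EuclideanSpace ℝ (Fin 2) => z 0) (hBinj _ h0)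
    simp [e0] at this
  have hupos : 0 < ‖B e0‖ := norm_pos_iff.2 hu
  set u := B e0 with hu_def
  set v := B e1 with hv_def
  set x : ℝ := -(inner ℝ u v) / ‖u‖ ^ 2 with hx
  have hxu : x * ‖u‖ ^ 2 = - inner ℝ u v := by rw [hx]; field_simp
  have hne : x • u + v ≠ 0 := by
    intro h0
    have : B (x • e0 + e1) = 0 := by rw [map_add, map_smul]; exact h0
    have := congrArg (fun z : EuclideanSpace ℝ (Fin 2) => z 1) (hBinj _ this)
    simp [e0, e1] at this
  have hpos : 0 < ‖x • u + v‖ := norm_pos_iff.2 hne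
  have horth : inner ℝ u (x • u + v) = 0 := by
    rw [inner_add_right, inner_smul_right, real_inner_self_eq_norm_sq]
    linarith
  have hnorm : ∀ w : EuclideanSpace ℝ (Fin 2), ‖B w‖ = ‖u‖ *
      Real.sqrt ((w 0 - x * w 1) ^ 2 + (‖x • u + v‖ / ‖u‖ * w 1) ^ 2) := by
    intro w
    have h1 : B w = (w 0 - x * w 1) • u + w 1 • (x • u + v) := by
      conv_lhs => rw [hdec w]
      rw [map_add, map_smul, map_smul, ← hu_def, ← hv_def]
      module
    have h2 : ‖B w‖ ^ 2 = (w 0 - x * w 1) ^ 2 * ‖u‖ ^ 2 + (w 1) ^ 2 * ‖x • u + v‖ ^ 2 := by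
      rw [h1, norm_add_sq_real, inner_smul_left, inner_smul_right, horth, norm_smul, norm_smul,
        mul_pow, mul_pow]
      simp
    have h3 : (w 0 - x * w 1) ^ 2 * ‖u‖ ^ 2 + (w 1) ^ 2 * ‖x • u + v‖ ^ 2 =
        ‖u‖ ^ 2 * ((w 0 - x * w 1) ^ 2 + (‖x • u + v‖ / ‖u‖ * w 1) ^ 2) := by
      field_simp
    rw [← Real.sqrt_sq (norm_nonneg (B w)), h2, h3, Real.sqrt_mul (sq_nonneg _),
      Real.sqrt_sq (norm_nonneg u)]
  refine ⟨‖u‖, x, ‖x • u + v‖ / ‖u‖, hupos, by positivity, ?_, ?_⟩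
  · intro p
    simp only [← hnorm]
    constructor
    · rintro ⟨z, hz, rfl⟩ w
      rw [hB]
      have hz' : ‖z‖ ≤ 1 := by simpa using hz
      calc _ ≤ ‖z‖ * ‖B w‖ := real_inner_le_norm _ _
        _ ≤ 1 * ‖B w‖ := by gcongr
        _ = _ := one_mul _
    · intro h
      refine ⟨A.symm p, ?_, by simp⟩
      obtain ⟨w, hw⟩ := hBsurj (A.symm p)
      have h3 := h w
      have h4 := hB (A.symm p) w
      rw [hw, real_inner_self_eq_norm_sq] at h4
      rw [hw] at h3
      simp only [LinearEquiv.apply_symm_apply] at h4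
      rw [h4] at h3
      have : ‖A.symm p‖ ≤ 1 := by
        by_contra hc
        push Not at hc
        nlinarith
      simpa using this
  · intro w
    rw [← hnorm]
    refine ⟨A (‖B w‖⁻¹ • B w), ⟨_, ?_, rfl⟩, ?_⟩
    · simp only [Metric.mem_closedBall, dist_zero_right, norm_smul, norm_inv, norm_norm]
      exact inv_mul_le_one
    · rw [hB, inner_smul_left, real_inner_self_eq_norm_sq]
      by_cases h0 : ‖B w‖ = 0
      · simp [h0]
      · simp; field_simp

/-- A Minkowski sum of at least two pairwise non-homothetic origin-symmetric ellipses with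
positive coefficients is never an ellipse. -/
theorem minkowski_sum_of_ellipses_not_ellipse
    (n : ℕ) (hn : 2 ≤ n)
    (E : Fin n → Set (EuclideanSpace ℝ (Fin 2)))
    (hE : ∀ i, IsSymmEllipse (E i))
    (hnh : ∀ i j, i ≠ j → ∀ r : ℝ, 0 < r → E i ≠ r • E j)
    (c : Fin n → ℝ) (hc : ∀ i, 0 < c i) :
    ¬ IsSymmEllipse (∑ i : Fin n, c i • E i) := by
  intro hS
  choose a x y ha hy hmem hatt using fun i => ell_param (hE i)
  obtain ⟨a0, x0, y0, ha0, hy0, hmem0, hatt0⟩ := ell_param hS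
  have hinj : ∀ i j, x i = x j → y i = y j → i = j := by
    intro i j hx hyy
    by_contra hij
    have hr : 0 < a i / a j := div_pos (ha i) (ha j)
    apply hnh i j hij (a i / a j) hr
    ext p
    rw [Set.mem_smul_set_iff_inv_smul_mem₀ hr.ne', hmem, hmem]
    refine forall_congr' fun w => ?_
    rw [inner_smul_left, hx, hyy]
    have := ha i
    have := ha j
    simp only [conj_trivial, inv_div]
    rw [div_mul_eq_mul_div, div_le_iff₀ (ha i)]
    constructor
    · intro h; nlinarith
    · intro h; nlinarith
  -- support functions add up
  have hsupp : ∀ w : EuclideanSpace ℝ (Fin 2),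
      ∑ i, c i * (a i * Real.sqrt ((w 0 - x i * w 1) ^ 2 + (y i * w 1) ^ 2)) =
        a0 * Real.sqrt ((w 0 - x0 * w 1) ^ 2 + (y0 * w 1) ^ 2) := by
    intro w
    apply le_antisymm
    · choose v hv hvw using fun i => hatt i w
      have hm : ∑ i, c i • v i ∈ ∑ i, c i • E i :=
        Set.finsetSum_mem_finsetSum _ _ _ fun i _ => Set.smul_mem_smul_set (hv i)
      have := (hmem0 _).1 hm w
      rw [sum_inner] at this
      simpa [inner_smul_left, hvw] using this
    · obtain ⟨p, hp, hpw⟩ := hatt0 w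
      rw [← hpw]
      rw [Set.mem_fintype_sum] at hp
      obtain ⟨g, hg, rfl⟩ := hp
      rw [sum_inner]
      refine Finset.sum_le_sum fun i _ => ?_
      obtain ⟨q, hq, hqe⟩ := hg i
      rw [← hqe]
      simp only [inner_smul_left, conj_trivial]
      exact mul_le_mul_of_nonneg_left ((hmem i q).1 hq w) (hc i).le
  have hsupp' : ∀ t : ℝ, ∑ i, (c i * a i) * Real.sqrt ((t - x i) ^ 2 + y i ^ 2) =
      a0 * Real.sqrt ((t - x0) ^ 2 + y0 ^ 2) := by
    intro t
    have := hsupp !₂[t, 1]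
    simpa [mul_assoc] using this
  have hca : ∀ i, c i * a i ≠ 0 := fun i => (mul_pos (hc i) (ha i)).ne'
  by_cases hex : ∃ j, x j = x0 ∧ y j = y0
  · obtain ⟨j, hxj, hyj⟩ := hex
    have hz := ell_indep x y (fun i => c i * a i - if i = j then a0 else 0) hy hinj (by
      intro t
      simp only [sub_mul, Finset.sum_sub_distrib, ite_mul, zero_mul, Finset.sum_ite_eq',
        Finset.mem_univ, if_true]
      rw [hsupp' t, hxj, hyj, sub_self])
    haveI : Nontrivial (Fin n) := Fin.nontrivial_iff_two_le.2 hn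
    obtain ⟨i, hi⟩ := exists_ne j
    have := hz i
    simp only [if_neg hi, sub_zero] at this
    exact hca i this
  · have hz := ell_indep (ι := Option (Fin n)) (fun o => o.elim x0 x) (fun o => o.elim y0 y)
      (fun o => o.elim (-a0) (fun i => c i * a i))
      (by rintro (_ | i) <;> simp [hy0, hy])
      (by
        rintro (_ | i) (_ | j) h1 h2
        · rfl
        · exact absurd ⟨j, h1.symm, h2.symm⟩ hex
        · exact absurd ⟨i, h1, h2⟩ hex
        · rw [hinj i j h1 h2])
      (by
        intro t
        rw [Fintype.sum_option]
        simp only [Option.elim]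
        rw [hsupp' t]; ring)
    have := hz none
    simp at this
    exact ha0.ne' this
end
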